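/- arXiv:1111.1200 — 3 statements merged into one kernel-verified Lean document; each statement's English description precedes it below -/
import Mathlib

section
/- If H₁ is an r₁-regular graph, H₂ is an r₂-regular graph, and H₁ and H₂ are cospectral (their adjacency matrices have equal characteristic polynomials), then χ_{H₁}(λ) = χ_{H₂}(λ), i.e., cospectral regular graphs have the same coronal. -/
open Matrix Polynomial

/-- The characteristic matrix `λ I - B` of `B`, over the field `ℂ(λ)` of rational functions. -/
noncomputable def charMatRatFunc {V : Type*} [Fintype V] [DecidableEq V]
    (B : Matrix V V ℂ) : Matrix V V (RatFunc ℂ) :=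
  Matrix.scalar V (RatFunc.X : RatFunc ℂ) - B.map (algebraMap ℂ (RatFunc ℂ))

/-- The coronal of a matrix `B`: the sum of the entries of `(λ I - B)⁻¹` over `ℂ(λ)`. -/
noncomputable def coronal {V : Type*} [Fintype V] [DecidableEq V]
    (B : Matrix V V ℂ) : RatFunc ℂ :=
  ∑ i, ∑ j, (charMatRatFunc B)⁻¹ i j

/-- The adjacency matrix of the corona `G ∘ H`. -/
def coronaMatrix {α β : Type*} (A : Matrix α α ℂ) (B : Matrix β β ℂ)
    [DecidableEq α] :
    Matrix (α ⊕ β × α) (α ⊕ β × α) ℂ :=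
  Matrix.fromBlocks A
    (Matrix.of fun i p => if i = p.2 then 1 else 0)
    (Matrix.of fun p j => if p.2 = j then 1 else 0)
    (Matrix.of fun p q => if p.2 = q.2 then B p.1 q.1 else 0)


lemma charMatRatFunc_det_ne_zero {V : Type*} [Fintype V] [DecidableEq V]
    (B : Matrix V V ℂ) : (charMatRatFunc B).det ≠ 0 := by
  have h : charMatRatFunc B = (algebraMap ℂ[X] (RatFunc ℂ)).mapMatrix B.charmatrix := by
    ext i j
    by_cases hij : i = j
    · subst hij
      simp [charMatRatFunc, charmatrix, RatFunc.algebraMap_eq_C]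
    · simp [charMatRatFunc, charmatrix, hij, RatFunc.algebraMap_eq_C]
  rw [h, ← RingHom.map_det]
  have h2 : B.charmatrix.det ≠ 0 := B.charpoly_monic.ne_zero
  exact (map_ne_zero_iff _ (RatFunc.algebraMap_injective ℂ)).2 h2

lemma ratFunc_X_sub_ne_zero (r : ℂ) : (RatFunc.X - algebraMap ℂ (RatFunc ℂ) r) ≠ 0 := by
  have h : algebraMap ℂ[X] (RatFunc ℂ) (X - C r) ≠ 0 :=
    (map_ne_zero_iff _ (RatFunc.algebraMap_injective ℂ)).2 (X_sub_C_ne_zero r)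
  simpa [RatFunc.algebraMap_eq_C] using h

lemma adj_mulVec_one {n : ℕ} (H : SimpleGraph (Fin n)) [DecidableRel H.Adj] (r : ℕ)
    (hreg : ∀ v, H.degree v = r) :
    H.adjMatrix ℂ *ᵥ (fun _ => 1) = fun _ => (r : ℂ) := by
  ext v
  simp [SimpleGraph.adjMatrix_mulVec_apply, hreg]

lemma coronal_mul {n : ℕ} (H : SimpleGraph (Fin n)) [DecidableRel H.Adj] (r : ℕ)
    (hreg : ∀ v, H.degree v = r) :
    coronal (H.adjMatrix ℂ) * (RatFunc.X - algebraMap ℂ (RatFunc ℂ) r) = (n : RatFunc ℂ) := by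
  have h1 : charMatRatFunc (H.adjMatrix ℂ) *ᵥ (fun _ => 1) =
      (RatFunc.X - algebraMap ℂ (RatFunc ℂ) r) • (fun _ => 1) := by
    ext v
    have h := congrArg (algebraMap ℂ (RatFunc ℂ)) (congrFun (adj_mulVec_one H r hreg) v)
    simp only [mulVec, dotProduct, mul_one, map_sum] at h
    simp only [charMatRatFunc, mulVec, dotProduct, mul_one, Matrix.sub_apply, Finset.sum_sub_distrib,
      map_apply, h, Pi.smul_apply, smul_eq_mul]
    simp [diagonal_apply]
  have h2 := congrArg (fun w => (charMatRatFunc (H.adjMatrix ℂ))⁻¹ *ᵥ w) h1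
  have hu : IsUnit (charMatRatFunc (H.adjMatrix ℂ)).det :=
    isUnit_iff_ne_zero.2 (charMatRatFunc_det_ne_zero _)
  simp only [mulVec_mulVec, nonsing_inv_mul _ hu, one_mulVec, mulVec_smul] at h2
  have h3 := congrArg (fun w => ∑ i, w i) h2
  simp only [Pi.smul_apply, smul_eq_mul, ← Finset.mul_sum, mulVec, dotProduct, mul_one] at h3
  rw [mul_comm]
  unfold coronal
  rw [← h3]
  simp

lemma le_of_isRoot {n : ℕ} (H : SimpleGraph (Fin n)) [DecidableRel H.Adj] (r s : ℕ)
    (hreg : ∀ v, H.degree v = r) (hs : (H.adjMatrix ℂ).charpoly.IsRoot (s : ℂ)) : s ≤ r := by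
  have h1 : Module.End.HasEigenvalue (Matrix.toLin' (H.adjMatrix ℂ)) (s : ℂ) := by
    rw [Module.End.hasEigenvalue_iff_isRoot_charpoly]
    simpa using hs
  obtain ⟨k, hk⟩ := eigenvalue_mem_ball h1
  have h2 : ∑ j ∈ Finset.univ.erase k, ‖H.adjMatrix ℂ k j‖ ≤ (r : ℝ) := by
    calc _ ≤ ∑ j, ‖H.adjMatrix ℂ k j‖ :=
          Finset.sum_le_sum_of_subset_of_nonneg (Finset.erase_subset _ _)
            (fun _ _ _ => norm_nonneg _)
      _ = r := by
          rw [← hreg k, ← SimpleGraph.card_neighborFinset_eq_degree,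
            SimpleGraph.neighborFinset_eq_filter]
          simp [SimpleGraph.adjMatrix_apply, apply_ite norm]
  have h3 := (Metric.mem_closedBall.1 hk).trans h2
  simpa [SimpleGraph.adjMatrix_apply] using h3

lemma isRoot_degree {n : ℕ} (H : SimpleGraph (Fin n)) [DecidableRel H.Adj] (r : ℕ)
    (hreg : ∀ v, H.degree v = r) (hn : 0 < n) : (H.adjMatrix ℂ).charpoly.IsRoot (r : ℂ) := by
  have h1 : Module.End.HasEigenvalue (Matrix.toLin' (H.adjMatrix ℂ)) (r : ℂ) := by
    apply Module.End.hasEigenvalue_of_hasEigenvector (x := fun _ => 1)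
    refine ⟨?_, fun h => one_ne_zero (congrFun h ⟨0, hn⟩)⟩
    rw [Module.End.mem_eigenspace_iff, toLin'_apply, adj_mulVec_one H r hreg]
    ext; simp
  rw [Module.End.hasEigenvalue_iff_isRoot_charpoly] at h1
  simpa using h1

/-- Cospectral regular graphs have the same coronal. -/
theorem coronal_eq_of_cospectral_regular {n₁ n₂ : ℕ}
    (H₁ : SimpleGraph (Fin n₁)) (H₂ : SimpleGraph (Fin n₂))
    [DecidableRel H₁.Adj] [DecidableRel H₂.Adj] (r₁ r₂ : ℕ)
    (hreg₁ : ∀ v : Fin n₁, H₁.degree v = r₁) (hreg₂ : ∀ v : Fin n₂, H₂.degree v = r₂)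
    (hcospec : (H₁.adjMatrix ℂ).charpoly = (H₂.adjMatrix ℂ).charpoly) :
    coronal (H₁.adjMatrix ℂ) = coronal (H₂.adjMatrix ℂ) := by
  have hn : n₁ = n₂ := by
    have h := congrArg natDegree hcospec
    simpa [charpoly_natDegree_eq_dim] using h
  subst hn
  rcases Nat.eq_zero_or_pos n₁ with h0 | hpos
  · subst h0
    simp [coronal]
  have hr : r₁ = r₂ := le_antisymm
    (le_of_isRoot H₂ r₂ r₁ hreg₂ (hcospec ▸ isRoot_degree H₁ r₁ hreg₁ hpos))
    (le_of_isRoot H₁ r₁ r₂ hreg₁ (hcospec.symm ▸ isRoot_degree H₂ r₂ hreg₂ hpos))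
  subst hr
  exact mul_right_cancel₀ (ratFunc_X_sub_ne_zero r₁)
    ((coronal_mul H₁ r₁ hreg₁).trans (coronal_mul H₂ r₁ hreg₂).symm)
end

section
/- Let B be the adjacency matrix of the path graph P_n (vertices 1,…,n in path order), and let f_j := f_{P_j}(λ) denote the characteristic polynomial of the path graph on j vertices with f_0 = 1. Then for all 1 ≤ i ≤ j ≤ n, the (i,j) entry of the adjugate matrix of λI − B (over ℂ[λ]) equals f_{i−1}·f_{n−j}. -/
open Matrix Polynomial

/-- The adjacency matrix of the path graph `Pₙ`: vertices `1, …, n` with `i` adjacent to `j`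
exactly when `|i - j| = 1`. -/
def pathMatrix (n : ℕ) : Matrix (Fin n) (Fin n) ℂ :=
  Matrix.of fun i j => if (i : ℕ) + 1 = (j : ℕ) ∨ (j : ℕ) + 1 = (i : ℕ) then 1 else 0

/-- Shifted path polynomials: `F 0 = 0`, `F (k+1) = f_k`. -/
noncomputable def pathF : ℕ → ℂ[X]
  | 0 => 0
  | 1 => 1
  | (k + 2) => X * pathF (k + 1) - pathF k

lemma pathF_rec (k : ℕ) : pathF (k + 2) = X * pathF (k + 1) - pathF k := by
  rw [pathF]

lemma pathF_add (a b : ℕ) :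
    pathF (a + 2) * pathF (b + 1) - pathF (a + 1) * pathF b = pathF (a + b + 2) := by
  induction b generalizing a with
  | zero => simp [pathF]
  | succ b ih =>
    have h := ih (a + 1)
    rw [show a + 1 + b + 2 = a + (b + 1) + 2 by ring] at h
    rw [← h, pathF_rec b, show a + 1 + 2 = (a + 1) + 2 by rfl, pathF_rec (a + 1)]
    ring

lemma charmatrix_path_apply (n : ℕ) (i j : Fin n) :
    charmatrix (pathMatrix n) i j = (if (i : ℕ) = j then X else 0)
      - (if (i : ℕ) + 1 = j then 1 else 0) - (if (j : ℕ) + 1 = i then 1 else 0) := by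
  rw [charmatrix_apply, diagonal_apply]
  simp only [pathMatrix, of_apply, Fin.ext_iff]
  by_cases h1 : (i : ℕ) = j
  · simp [h1]
  · by_cases h2 : (i : ℕ) + 1 = j
    · have h3 : ¬ ((j : ℕ) + 1 = i) := by omega
      simp [h1, h2, h3]
    · simp [h1, h2]

lemma charpoly_path_rec (n : ℕ) : (pathMatrix (n + 2)).charpoly =
    X * (pathMatrix (n + 1)).charpoly - (pathMatrix n).charpoly := by
  have e1 : (charmatrix (pathMatrix (n + 2))).submatrix Fin.succ (Fin.succAbove 0)
      = charmatrix (pathMatrix (n + 1)) := by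
    ext1 i j
    simp [charmatrix_path_apply]
  have e2 : ((charmatrix (pathMatrix (n + 2))).submatrix Fin.succ (Fin.succAbove 1)).det
      = - (charmatrix (pathMatrix n)).det := by
    rw [det_succ_column_zero, Fin.sum_univ_succ]
    rw [Finset.sum_eq_zero]
    · have : (((charmatrix (pathMatrix (n + 2))).submatrix Fin.succ (Fin.succAbove 1)).submatrix
          (Fin.succAbove 0) Fin.succ) = charmatrix (pathMatrix n) := by
        ext1 i j
        have : (Fin.succAbove (1 : Fin (n + 2)) j.succ) = j.succ.succ := by
          rw [← Fin.succ_zero_eq_one, Fin.succ_succAbove_succ]; simp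
        simp [charmatrix_path_apply, this]
      rw [this]
      simp [charmatrix_path_apply, pathMatrix]
    · intro i _
      simp [charmatrix_path_apply, pathMatrix]
  unfold charpoly
  rw [det_succ_row_zero, Fin.sum_univ_succ, Fin.sum_univ_succ, Finset.sum_eq_zero]
  · rw [e1, show (Fin.succ (0 : Fin (n + 1))) = 1 from rfl, e2]
    simp [charmatrix_path_apply, pathMatrix]
    ring
  · intro i _
    simp [charmatrix_path_apply]

lemma charpoly_path (n : ℕ) : (pathMatrix n).charpoly = pathF (n + 1) := by
  induction n using Nat.twoStepInduction with
  | zero => simp [charpoly, pathF]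
  | one => simp [charpoly, pathF, charmatrix_path_apply, pathMatrix]
  | more n h1 h2 => rw [charpoly_path_rec, h1, h2, pathF_rec (n + 1)]

lemma row_sum (n : ℕ) (i : Fin n) (h : ℕ → ℂ[X]) (hn : h n = 0) :
    ∑ k : Fin n, charmatrix (pathMatrix n) i k * h k =
      X * h i - h (i + 1) - (if (i : ℕ) = 0 then 0 else h (i - 1)) := by
  simp only [charmatrix_path_apply, sub_mul, Finset.sum_sub_distrib, ite_mul, zero_mul, one_mul]
  rw [Fin.sum_univ_eq_sum_range (fun k => if (i : ℕ) = k then X * h k else 0),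
    Fin.sum_univ_eq_sum_range (fun k => if (i : ℕ) + 1 = k then h k else 0),
    Fin.sum_univ_eq_sum_range (fun k => if k + 1 = (i : ℕ) then h k else 0)]
  obtain ⟨i, hi⟩ := i
  congr 1
  · congr 1
    · simp [hi]
    · simp only [Finset.sum_ite_eq, Finset.mem_range]
      split_ifs with h1
      · rfl
      · rw [show i + 1 = n by omega, hn]
  · rcases i with _ | i
    · simp
    · simp
      omega

noncomputable def pathG (n : ℕ) : Matrix (Fin n) (Fin n) ℂ[X] :=
  Matrix.of fun i j => pathF (min (i : ℕ) j + 1) * pathF (n - max (i : ℕ) j)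

lemma mul_pathG (n : ℕ) :
    charmatrix (pathMatrix n) * pathG n = (charmatrix (pathMatrix n)).det • 1 := by
  have hd : (charmatrix (pathMatrix n)).det = pathF (n + 1) := charpoly_path n
  ext1 i j
  rw [mul_apply, hd]
  simp only [pathG, of_apply]
  rw [row_sum n i (fun k => pathF (min k (j : ℕ) + 1) * pathF (n - max k (j : ℕ)))
    (by rw [max_eq_left j.2.le]; simp [pathF])]
  simp only [Matrix.smul_apply, one_apply, Fin.ext_iff]
  obtain ⟨i, hi⟩ := i
  obtain ⟨j, hj⟩ := j
  simp only
  rcases lt_trichotomy i j with h | h | h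
  · rw [if_neg h.ne, min_eq_left h.le, max_eq_right h.le, min_eq_left (show i + 1 ≤ j from h),
      max_eq_right (show i + 1 ≤ j from h), pathF_rec]
    rcases i with _ | i
    · simp [pathF]
    · simp only [Nat.add_sub_cancel, if_neg (Nat.succ_ne_zero i)]
      rw [min_eq_left (by omega), max_eq_right (by omega)]
      simp; ring
  · subst h
    obtain ⟨m, rfl⟩ : ∃ m, n = i + m + 1 := ⟨n - i - 1, by omega⟩
    have := pathF_add i m
    rw [show i + m + 1 + 1 = i + m + 2 by ring, ← this, pathF_rec]
    simp only [min_self, max_self, if_true]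
    rw [min_eq_right (by omega), max_eq_left (by omega), show i + m + 1 - i = m + 1 by omega,
      show i + m + 1 - (i + 1) = m by omega]
    rcases i with _ | i
    · simp [pathF]
    · simp only [Nat.add_sub_cancel, if_neg (Nat.succ_ne_zero i)]
      rw [min_eq_left (by omega), max_eq_right (by omega),
        show i + 1 + m + 1 - (i + 1) = m + 1 by omega]
      simp; ring
  · rw [if_neg h.ne', if_neg (by omega)]
    obtain ⟨m, rfl⟩ : ∃ m, n = i + m + 1 := ⟨n - i - 1, by omega⟩
    rw [min_eq_right (by omega), max_eq_left (by omega), min_eq_right (by omega),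
      max_eq_left (by omega), min_eq_right (by omega), max_eq_left (by omega),
      show i + m + 1 - i = m + 1 by omega, show i + m + 1 - (i + 1) = m by omega,
      show i + m + 1 - (i - 1) = m + 2 by omega, pathF_rec]
    simp; ring

/-- For the path graph `Pₙ` (vertices `1, …, n` in path order, here `0`-indexed) and
`1 ≤ i ≤ j ≤ n` (here `i, j : Fin n`), the `(i, j)` entry of the adjugate of `λI - B` is
`f_{i-1} ⬝ f_{n-j}`, where `fⱼ` is the characteristic polynomial of `Pⱼ` (with `f₀ = 1`). -/
theorem adjugate_charmatrix_path (n : ℕ) (i j : Fin n) (hij : i ≤ j) :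
    (Matrix.charmatrix (pathMatrix n)).adjugate i j =
      (pathMatrix (i : ℕ)).charpoly * (pathMatrix (n - 1 - (j : ℕ))).charpoly := by
  have hd : (charmatrix (pathMatrix n)).det ≠ 0 := (charpoly_monic (pathMatrix n)).ne_zero
  have key : (charmatrix (pathMatrix n)).adjugate = pathG n := by
    have h := congrArg (fun M => (charmatrix (pathMatrix n)).adjugate * M) (mul_pathG n)
    simp only [← Matrix.mul_assoc, adjugate_mul, Matrix.smul_mul, Matrix.mul_smul,
      Matrix.one_mul, Matrix.mul_one] at h
    exact (smul_right_injective _ hd h).symm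
  have hij' : (i : ℕ) ≤ j := hij
  rw [key, charpoly_path, charpoly_path]
  simp only [pathG, of_apply]
  rw [min_eq_left hij', max_eq_right hij', show n - 1 - (j : ℕ) + 1 = n - j by omega]
end

section
/- If H₁ and H₂ are cospectral graphs (on the same number n of vertices, with equal characteristic polynomials) that additionally have equal coronals χ_{H₁}(λ) = χ_{H₂}(λ), then for any graph G the coronas G∘H₁ and G∘H₂ are cospectral: f_{G∘H₁}(λ) = f_{G∘H₂}(λ). -/
open Matrix Polynomial

open scoped Kronecker

theorem aux_map_charpoly {V : Type*} [Fintype V] [DecidableEq V] (B : Matrix V V ℂ) :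
    algebraMap ℂ[X] (RatFunc ℂ) B.charpoly = (charMatRatFunc B).det := by
  rw [Matrix.charpoly, RingHom.map_det]
  congr 1
  ext i j
  by_cases h : i = j
  · subst h
    simp [charMatRatFunc, Matrix.charmatrix_apply, RatFunc.algebraMap_C, RatFunc.algebraMap_eq_C]
  · simp [charMatRatFunc, Matrix.charmatrix_apply, h, RatFunc.algebraMap_C,
      RatFunc.algebraMap_eq_C]

theorem aux_isUnit {V : Type*} [Fintype V] [DecidableEq V] (B : Matrix V V ℂ) :
    IsUnit (charMatRatFunc B).det := by
  rw [← aux_map_charpoly, isUnit_iff_ne_zero]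
  exact RatFunc.algebraMap_ne_zero B.charpoly_monic.ne_zero

theorem aux_blocks {α β : Type*} [Fintype α] [DecidableEq α] [Fintype β] [DecidableEq β]
    (A : Matrix α α ℂ) (B : Matrix β β ℂ) :
    charMatRatFunc (coronaMatrix A B) = Matrix.fromBlocks (charMatRatFunc A)
      (Matrix.of fun i (p : β × α) => if i = p.2 then (-1 : RatFunc ℂ) else 0)
      (Matrix.of fun (p : β × α) j => if p.2 = j then (-1 : RatFunc ℂ) else 0)
      (charMatRatFunc B ⊗ₖ (1 : Matrix α α (RatFunc ℂ))) := by
  ext x y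
  rcases x with i | ⟨b, i⟩ <;> rcases y with j | ⟨c, j⟩
  · simp [charMatRatFunc, coronaMatrix, Matrix.diagonal_apply]
  · by_cases h : i = j <;> simp [charMatRatFunc, coronaMatrix, h]
  · by_cases h : i = j <;> simp [charMatRatFunc, coronaMatrix, h]
  · by_cases h : i = j <;>
      simp [charMatRatFunc, coronaMatrix, Matrix.diagonal_apply, Matrix.one_apply, h]

theorem aux_schur {α β : Type*} [Fintype α] [DecidableEq α] [Fintype β] [DecidableEq β]
    (N : Matrix β β (RatFunc ℂ)) :
    (Matrix.of fun (i : α) (p : β × α) => if i = p.2 then (-1 : RatFunc ℂ) else 0) *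
      (N ⊗ₖ (1 : Matrix α α (RatFunc ℂ))) *
      (Matrix.of fun (p : β × α) (j : α) => if p.2 = j then (-1 : RatFunc ℂ) else 0) =
      Matrix.scalar α (∑ i, ∑ j, N i j) := by
  ext i j
  simp only [Matrix.mul_apply, Fintype.sum_prod_type, Matrix.of_apply, Matrix.kroneckerMap_apply,
    Matrix.one_apply, Matrix.scalar_apply, Matrix.diagonal_apply]
  by_cases h : i = j
  · subst h
    simp
    rw [Finset.sum_comm]
  · simp [h]

theorem aux_main {α β : Type*} [Fintype α] [DecidableEq α] [Fintype β] [DecidableEq β]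
    (A : Matrix α α ℂ) (B : Matrix β β ℂ) :
    algebraMap ℂ[X] (RatFunc ℂ) (coronaMatrix A B).charpoly =
      (algebraMap ℂ[X] (RatFunc ℂ) B.charpoly) ^ Fintype.card α *
        (charMatRatFunc A - Matrix.scalar α (coronal B)).det := by
  have hu : IsUnit (charMatRatFunc B ⊗ₖ (1 : Matrix α α (RatFunc ℂ))) := by
    rw [Matrix.isUnit_iff_isUnit_det, Matrix.det_kronecker]
    simpa using (aux_isUnit B).pow _
  letI := hu.invertible
  rw [aux_map_charpoly, aux_blocks, Matrix.det_fromBlocks₂₂, Matrix.invOf_eq_nonsing_inv,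
    Matrix.inv_kronecker, inv_one, aux_schur, Matrix.det_kronecker, aux_map_charpoly]
  simp [coronal]

/-- If `H₁` and `H₂` are cospectral and have the same coronal, then `G ∘ H₁` and `G ∘ H₂`
are cospectral, for any `G`. -/
theorem corona_cospectral_right {m n : ℕ} (G : SimpleGraph (Fin m))
    (H₁ H₂ : SimpleGraph (Fin n)) [DecidableRel G.Adj] [DecidableRel H₁.Adj]
    [DecidableRel H₂.Adj]
    (hcospec : (H₁.adjMatrix ℂ).charpoly = (H₂.adjMatrix ℂ).charpoly)
    (hcoronal : coronal (H₁.adjMatrix ℂ) = coronal (H₂.adjMatrix ℂ)) :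
    (coronaMatrix (G.adjMatrix ℂ) (H₁.adjMatrix ℂ)).charpoly =
      (coronaMatrix (G.adjMatrix ℂ) (H₂.adjMatrix ℂ)).charpoly := by
  apply RatFunc.algebraMap_injective ℂ
  rw [aux_main, aux_main, hcospec, hcoronal]
end
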